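/- Assume a, d ∈ L^∞((0,1);ℝ), b, c : [0,1] → ℝ of bounded variation, and |r₀r₁| ≠ e^{α(1)+δ(1)}. Then the set of integers k ∈ ℤ for which there exists a pair (φ,ψ) ≠ (0,0) of absolutely continuous functions [0,1] → ℂ satisfying −φ'(x) + (a(x) − ikω) φ(x) + c(x) ψ(x) = 0 and ψ'(x) + (d(x) − ikω) ψ(x) + b(x) φ(x) = 0 for almost every x ∈ (0,1), together with ψ(0) = r₀ φ(0) and φ(1) = r₁ ψ(1), is finite. -/

import Mathlib

open MeasureTheory Set

/-- `u` is absolutely continuous on `[0,1]` with (a.e.) derivative `u'`: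
`u'` is integrable on `[0,1]` and `u` is the integral of `u'` there. -/
def IsACOn01 (u u' : ℝ → ℂ) : Prop :=
  IntervalIntegrable u' volume 0 1 ∧
  ∀ x ∈ Icc (0 : ℝ) 1, u x = u 0 + ∫ y in (0 : ℝ)..x, u' y

/-!
Integrating factors remove the zeroth-order terms and turn a solution at frequency `s` into a pair
with `u' = p e^{2isx} v` and `v' = q e^{-2isx} u`, where `p` and `q` do not depend on `s`. By
Grönwall's inequality `|u| + |v|` is at most a constant times `|u(0)|`, uniformly in `s`.
Integrating by parts against the primitive of `p e^{2isx}`, which tends to zero by the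
Riemann–Lebesgue lemma, shows that `u(1) - u(0) = o(|u(0)|)` as `|s| → ∞`, and likewise for `v`. The
two boundary conditions then give `(ρ r₀ - 1) u(0) = o(|u(0)|)` with `|ρ| = |r₁| e^{-α(1)-δ(1)}`,
which for large `|s|` is incompatible with `|r₀ r₁| ≠ e^{α(1)+δ(1)}`.
-/

open Bornology Filter Topology

theorem finite_setOf_intCast_mul_mem {S : Set ℝ} {ω : ℝ} (hS : IsBounded S) (hω : ω ≠ 0) :
    {k : ℤ | k * ω ∈ S}.Finite := by
  have hlim : Tendsto (fun k : ℤ => (k : ℝ) * ω) cofinite (cobounded ℝ) :=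
    (tendsto_mul_right_cobounded hω).comp <| by
      simpa only [Metric.cobounded_eq_cocompact] using Int.tendsto_coe_cofinite
  have hcompl := mem_cofinite.1 (hlim (isBounded_def.1 hS))
  rwa [preimage_compl, compl_compl] at hcompl

theorem intervalIntegrable_of_boundedVariationOn {f : ℝ → ℝ} {a b : ℝ}
    (hf : BoundedVariationOn f (uIcc a b)) : IntervalIntegrable f volume a b := by
  obtain ⟨p, q, hp, hq, rfl⟩ := hf.locallyBoundedVariationOn.exists_monotoneOn_sub_monotoneOn
  exact hp.intervalIntegrable.sub hq.intervalIntegrable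

theorem intervalIntegrable_of_abs_le {f : ℝ → ℝ} {C a b : ℝ} (hf : Measurable f)
    (hC : ∀ x, |f x| ≤ C) : IntervalIntegrable f volume a b :=
  intervalIntegrable_const.mono_fun' hf.aestronglyMeasurable (ae_of_all _ hC)

theorem intervalIntegrable_ofReal {f : ℝ → ℝ} {a b : ℝ} (hf : IntervalIntegrable f volume a b) :
    IntervalIntegrable (fun x => (f x : ℂ)) volume a b :=
  ⟨hf.1.ofReal, hf.2.ofReal⟩

section AbsolutelyContinuous

variable {X Y : Type*} [PseudoMetricSpace X] [PseudoMetricSpace Y] {a b : ℝ}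

theorem absolutelyContinuousOnInterval_of_dist_le {f : ℝ → X} {g : ℝ → Y} (C : ℝ)
    (hg : AbsolutelyContinuousOnInterval g a b)
    (h : ∀ x ∈ uIcc a b, ∀ y ∈ uIcc a b, dist (f x) (f y) ≤ C * dist (g x) (g y)) :
    AbsolutelyContinuousOnInterval f a b := by
  refine squeeze_zero' (.of_forall fun _ => Finset.sum_nonneg fun _ _ => dist_nonneg) ?_
    (by simpa using Tendsto.const_mul C hg)
  rw [eventually_inf_principal]
  refine .of_forall fun I hI => ?_
  obtain ⟨hmem, -⟩ := hI
  rw [Finset.mul_sum]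
  refine Finset.sum_le_sum fun i hi => ?_
  exact h _ (hmem i hi).1 _ (hmem i hi).2

theorem absolutelyContinuousOnInterval_comp {F : Type*} [SeminormedAddCommGroup F]
    {g : F → X} {f : ℝ → F} (hg : LocallyLipschitz g)
    (hf : AbsolutelyContinuousOnInterval f a b) :
    AbsolutelyContinuousOnInterval (fun x => g (f x)) a b := by
  obtain ⟨K, hK⟩ := (hg.locallyLipschitzOn (s := f '' uIcc a b)).exists_lipschitzOnWith_of_compact
    (isCompact_uIcc.image_of_continuousOn hf.continuousOn)
  exact absolutelyContinuousOnInterval_of_dist_le K hf fun x hx y hy =>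
    hK.dist_le_mul _ (mem_image_of_mem f hx) _ (mem_image_of_mem f hy)

variable {E : Type*} [NormedAddCommGroup E] [NormedSpace ℝ E] {f f' : ℝ → E}

theorem absolutelyContinuousOnInterval_of_eq_add_integral
    (hf' : IntervalIntegrable f' volume a b)
    (hf : ∀ x ∈ uIcc a b, f x = f a + ∫ y in a..x, f' y) :
    AbsolutelyContinuousOnInterval f a b := by
  have hsub {x : ℝ} (hx : x ∈ uIcc a b) : IntervalIntegrable f' volume a x :=
    hf'.mono_set (uIcc_subset_uIcc_left hx)
  refine absolutelyContinuousOnInterval_of_dist_le 1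
    (hf'.norm.absolutelyContinuousOnInterval_intervalIntegral left_mem_uIcc) fun x hx y hy => ?_
  rw [hf x hx, hf y hy, dist_add_left, dist_eq_norm, one_mul, Real.dist_eq,
    intervalIntegral.integral_interval_sub_left (hsub hx) (hsub hy),
    intervalIntegral.integral_interval_sub_left (hsub hx).norm (hsub hy).norm]
  exact intervalIntegral.norm_integral_le_abs_integral_norm

variable [CompleteSpace E]

theorem ae_hasDerivAt_of_eq_add_integral (hf' : IntervalIntegrable f' volume a b)
    (hf : ∀ x ∈ Icc a b, f x = f a + ∫ y in a..x, f' y) :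
    ∀ᵐ x ∂volume.restrict (Ioo a b), HasDerivAt f (f' x) x := by
  rw [ae_restrict_iff' measurableSet_Ioo]
  filter_upwards [hf'.ae_hasDerivAt_integral] with x hderiv hx
  have hIcc := Ioo_subset_Icc_self hx
  refine ((hderiv (Icc_subset_uIcc hIcc) a left_mem_uIcc).const_add (f a)).congr_of_eventuallyEq ?_
  filter_upwards [Ioo_mem_nhds hx.1 hx.2] with y hy
  exact hf y (Ioo_subset_Icc_self hy)

theorem integral_eq_sub_of_ae_hasDerivAt (hab : a ≤ b)
    (hf : AbsolutelyContinuousOnInterval f a b) (hf' : IntervalIntegrable f' volume a b)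
    (hderiv : ∀ᵐ x ∂volume.restrict (Ioo a b), HasDerivAt f (f' x) x) :
    ∫ x in a..b, f' x = f b - f a := by
  have hac : AbsolutelyContinuousOnInterval (f - fun x => ∫ y in a..x, f' y) a b :=
    hf.sub (absolutelyContinuousOnInterval_of_eq_add_integral hf' (by simp))
  rw [restrict_Ioo_eq_restrict_Icc, ae_restrict_iff' measurableSet_Icc, ← uIcc_of_le hab] at hderiv
  obtain ⟨C, hC⟩ := hac.const_of_ae_hasDerivAt_zero <| by
    filter_upwards [hderiv, hf'.ae_hasDerivAt_integral] with x hx hint hmem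
    simpa using (hx hmem).sub (hint hmem a left_mem_uIcc)
  have hends := (hC b right_mem_uIcc).trans (hC a left_mem_uIcc).symm
  simp only [Pi.sub_apply, intervalIntegral.integral_same, sub_zero] at hends
  rw [← hends, sub_sub_cancel]

theorem le_mul_exp_integral_of_ae_hasDerivAt_le {f f' m : ℝ → ℝ} (hab : a ≤ b)
    (hf : AbsolutelyContinuousOnInterval f a b) (hf' : IntervalIntegrable f' volume a b)
    (hm : IntervalIntegrable m volume a b)
    (hderiv : ∀ᵐ x ∂volume.restrict (Ioo a b), HasDerivAt f (f' x) x)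
    (hle : ∀ᵐ x ∂volume.restrict (Ioo a b), f' x ≤ m x * f x) :
    f b ≤ f a * Real.exp (∫ x in a..b, m x) := by
  set M : ℝ → ℝ := fun x => ∫ y in a..x, m y with hM
  set D : ℝ → ℝ := fun x => Real.exp (-M x) with hD
  have hD_ac : AbsolutelyContinuousOnInterval D a b :=
    absolutelyContinuousOnInterval_comp Real.contDiff_exp.locallyLipschitz
      (hm.absolutelyContinuousOnInterval_intervalIntegral left_mem_uIcc).neg
  have hDf_deriv : ∀ᵐ x ∂volume.restrict (Ioo a b),
      HasDerivAt (D * f) (D x * (f' x - m x * f x)) x := by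
    filter_upwards [hderiv, ae_hasDerivAt_of_eq_add_integral (f := M) hm (by simp [hM])]
      with x hfx hMx
    exact (hMx.fun_neg.exp.mul hfx).congr_deriv (by simp only [hD]; ring)
  have hDf_int : IntervalIntegrable (fun x => D x * (f' x - m x * f x)) volume a b :=
    (hf'.sub (hm.mul_continuousOn hf.continuousOn)).continuousOn_mul hD_ac.continuousOn
  have hdecr : (D * f) b ≤ (D * f) a := by
    rw [← sub_nonpos, ← integral_eq_sub_of_ae_hasDerivAt hab (hD_ac.mul hf) hDf_int hDf_deriv,
      intervalIntegral.integral_of_le hab, ← restrict_Ioo_eq_restrict_Ioc]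
    refine integral_nonpos_of_ae ?_
    filter_upwards [hle] with x hx
    exact mul_nonpos_of_nonneg_of_nonpos (Real.exp_pos _).le (sub_nonpos.2 hx)
  simp only [Pi.mul_apply, hD, hM, intervalIntegral.integral_same, neg_zero, Real.exp_zero,
    one_mul] at hdecr
  rwa [Real.exp_neg, inv_mul_le_iff₀ (Real.exp_pos _), mul_comm] at hdecr

theorem le_mul_exp_integral_of_le_add_integral {f m : ℝ → ℝ} {C : ℝ} (hab : a ≤ b)
    (hf : ContinuousOn f (Icc a b)) (hm : IntervalIntegrable m volume a b)
    (hm_nonneg : ∀ x ∈ Icc a b, 0 ≤ m x)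
    (hle : ∀ x ∈ Icc a b, f x ≤ C + ∫ y in a..x, m y * f y) :
    f b ≤ C * Real.exp (∫ x in a..b, m x) := by
  have hmf : IntervalIntegrable (fun x => m x * f x) volume a b :=
    hm.mul_continuousOn (by rwa [uIcc_of_le hab])
  set W : ℝ → ℝ := fun x => C + ∫ y in a..x, m y * f y with hW
  have hW_eq {x : ℝ} : W x = W a + ∫ y in a..x, m y * f y := by simp [hW]
  calc f b ≤ W b := hle b (right_mem_Icc.2 hab)
    _ ≤ W a * Real.exp (∫ x in a..b, m x) := by
      refine le_mul_exp_integral_of_ae_hasDerivAt_le hab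
        (absolutelyContinuousOnInterval_of_eq_add_integral hmf fun _ _ => hW_eq) hmf hm
        (ae_hasDerivAt_of_eq_add_integral hmf fun _ _ => hW_eq) ?_
      filter_upwards [ae_restrict_mem measurableSet_Ioo] with x hx
      have hx' := Ioo_subset_Icc_self hx
      exact mul_le_mul_of_nonneg_left (hle x hx') (hm_nonneg x hx')
    _ = C * Real.exp (∫ x in a..b, m x) := by simp [hW]

end AbsolutelyContinuous

namespace IsACOn01

variable {u u' v v' : ℝ → ℂ}

theorem absolutelyContinuousOnInterval (hu : IsACOn01 u u') :
    AbsolutelyContinuousOnInterval u 0 1 :=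
  absolutelyContinuousOnInterval_of_eq_add_integral hu.1 <| by
    simpa only [uIcc_of_le zero_le_one] using hu.2

theorem continuousOn (hu : IsACOn01 u u') : ContinuousOn u (uIcc 0 1) :=
  hu.absolutelyContinuousOnInterval.continuousOn

theorem ae_hasDerivAt (hu : IsACOn01 u u') :
    ∀ᵐ x ∂volume.restrict (Ioo 0 1), HasDerivAt u (u' x) x :=
  ae_hasDerivAt_of_eq_add_integral hu.1 hu.2

theorem of_ae_hasDerivAt (hu : AbsolutelyContinuousOnInterval u 0 1)
    (hu' : IntervalIntegrable u' volume 0 1)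
    (hderiv : ∀ᵐ x ∂volume.restrict (Ioo 0 1), HasDerivAt u (u' x) x) : IsACOn01 u u' := by
  refine ⟨hu', fun x hx => ?_⟩
  have hsub : uIcc 0 x ⊆ uIcc 0 1 := uIcc_subset_uIcc_left (Icc_subset_uIcc hx)
  have hFTC := integral_eq_sub_of_ae_hasDerivAt hx.1 (hu.mono hsub) (hu'.mono_set hsub)
    (ae_restrict_of_ae_restrict_of_subset (Ioo_subset_Ioo_right hx.2) hderiv)
  rw [hFTC, add_sub_cancel]

theorem congr_deriv (hu : IsACOn01 u u') (h : u' =ᵐ[volume.restrict (Ioo 0 1)] v') :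
    IsACOn01 u v' := by
  refine of_ae_hasDerivAt hu.absolutelyContinuousOnInterval (hu.1.congr_ae ?_) ?_
  · rwa [uIoc_of_le zero_le_one, ← restrict_Ioo_eq_restrict_Ioc]
  · filter_upwards [hu.ae_hasDerivAt, h] with x hx hu'v'
    rwa [← hu'v']

theorem mul (hu : IsACOn01 u u') (hv : IsACOn01 v v') :
    IsACOn01 (fun x => u x * v x) (fun x => u' x * v x + u x * v' x) := by
  refine of_ae_hasDerivAt
    (hu.absolutelyContinuousOnInterval.smul hv.absolutelyContinuousOnInterval)
    ((hu.1.mul_continuousOn hv.continuousOn).add (hv.1.continuousOn_mul hu.continuousOn)) ?_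
  filter_upwards [hu.ae_hasDerivAt, hv.ae_hasDerivAt] with x hux hvx
  exact hux.mul hvx

theorem cexp (hu : IsACOn01 u u') :
    IsACOn01 (fun x => Complex.exp (u x)) (fun x => Complex.exp (u x) * u' x) := by
  have hac := absolutelyContinuousOnInterval_comp
    (Complex.contDiff_exp (𝕜 := ℝ)).locallyLipschitz hu.absolutelyContinuousOnInterval
  refine of_ae_hasDerivAt hac (hu.1.continuousOn_mul hac.continuousOn) ?_
  filter_upwards [hu.ae_hasDerivAt] with x hux
  exact hux.cexp

theorem integral_eq_sub (hu : IsACOn01 u u') : ∫ x in (0 : ℝ)..1, u' x = u 1 - u 0 :=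
  eq_sub_of_add_eq' (hu.2 1 (right_mem_Icc.2 zero_le_one)).symm

end IsACOn01

theorem isACOn01_integral {f : ℝ → ℂ} (hf : IntervalIntegrable f volume 0 1) :
    IsACOn01 (fun x => ∫ y in (0 : ℝ)..x, f y) f :=
  ⟨hf, by simp⟩

/-- The integrating factor `exp (∫₀ˣ A)`, which turns `y' + A y` into a total derivative. -/
noncomputable def expIntegral (A : ℝ → ℂ) (x : ℝ) : ℂ :=
  Complex.exp (∫ y in (0 : ℝ)..x, A y)

/-- The function `f` carried by a wave of angular frequency `t`. -/
noncomputable def modulate (f : ℝ → ℂ) (t x : ℝ) : ℂ :=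
  f x * Complex.exp ((t * x : ℝ) * Complex.I)

/-- The size of the primitive `F = ∫₀ˣ f`, measured by its endpoint value and its weighted norm
`∫ |F| |g|`; it controls `u 1 - u 0` when `u' = f v` and `v' = g u`. -/
noncomputable def primitiveSize (f g : ℝ → ℂ) : ℝ :=
  ‖∫ x in (0 : ℝ)..1, f x‖ + ∫ x in (0 : ℝ)..1, ‖∫ y in (0 : ℝ)..x, f y‖ * ‖g x‖

section ExpIntegral

variable {A B C y y' g : ℝ → ℂ} {x : ℝ}

@[simp]
theorem expIntegral_zero (A : ℝ → ℂ) : expIntegral A 0 = 1 := by simp [expIntegral]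

theorem expIntegral_ne_zero (A : ℝ → ℂ) (x : ℝ) : expIntegral A x ≠ 0 := Complex.exp_ne_zero _

theorem norm_expIntegral (A : ℝ → ℂ) (x : ℝ) :
    ‖expIntegral A x‖ = Real.exp (∫ y in (0 : ℝ)..x, A y).re := Complex.norm_exp _

theorem isACOn01_expIntegral (hA : IntervalIntegrable A volume 0 1) :
    IsACOn01 (expIntegral A) (fun x => expIntegral A x * A x) :=
  (isACOn01_integral hA).cexp

theorem IsACOn01.expIntegral_mul (hy : IsACOn01 y y') (hA : IntervalIntegrable A volume 0 1)
    (h : ∀ᵐ x ∂volume.restrict (Ioo 0 1), y' x + A x * y x = g x) :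
    IsACOn01 (fun x => expIntegral A x * y x) (fun x => expIntegral A x * g x) := by
  refine ((isACOn01_expIntegral hA).mul hy).congr_deriv ?_
  filter_upwards [h] with x hx
  rw [← hx]
  ring

theorem expIntegral_eq_modulate_mul {t : ℝ} (hB : IntervalIntegrable B volume 0 1)
    (hC : IntervalIntegrable C volume 0 1) (hA : ∀ y, A y = B y + t * Complex.I + C y)
    (hx : x ∈ Icc (0 : ℝ) 1) :
    expIntegral A x = modulate (expIntegral B) t x * expIntegral C x := by
  have hsub : uIcc 0 x ⊆ uIcc 0 1 := uIcc_subset_uIcc_left (Icc_subset_uIcc hx)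
  replace hB := hB.mono_set hsub
  replace hC := hC.mono_set hsub
  simp only [expIntegral, modulate, ← Complex.exp_add, hA]
  rw [intervalIntegral.integral_add (hB.add intervalIntegrable_const) hC,
    intervalIntegral.integral_add hB intervalIntegrable_const, intervalIntegral.integral_const,
    sub_zero, Complex.real_smul]
  push_cast
  ring_nf

end ExpIntegral

section Modulate

variable {f g : ℝ → ℂ} {a b t : ℝ}

@[simp]
theorem norm_modulate (f : ℝ → ℂ) (t x : ℝ) : ‖modulate f t x‖ = ‖f x‖ := by
  rw [modulate, norm_mul, Complex.norm_exp_ofReal_mul_I, mul_one]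

theorem intervalIntegrable_modulate (hf : IntervalIntegrable f volume a b) (t : ℝ) :
    IntervalIntegrable (modulate f t) volume a b :=
  hf.mul_continuousOn (by fun_prop)

theorem tendsto_integral_modulate (f : ℝ → ℂ) (hab : a ≤ b) :
    Tendsto (fun t => ∫ x in a..b, modulate f t x) (cobounded ℝ) (𝓝 0) := by
  have hscale : Tendsto (fun t : ℝ => -(2 * Real.pi)⁻¹ * t) (cobounded ℝ) (cobounded ℝ) :=
    tendsto_mul_left_cobounded (neg_ne_zero.2 (inv_ne_zero Real.two_pi_pos.ne'))
  have hRL := Real.tendsto_integral_exp_smul_cocompact ((Ioc a b).indicator f)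
  rw [← Metric.cobounded_eq_cocompact] at hRL
  refine (hRL.comp hscale).congr fun t => ?_
  rw [intervalIntegral.integral_of_le hab, ← integral_indicator measurableSet_Ioc]
  refine integral_congr_ae (.of_forall fun x => ?_)
  by_cases hx : x ∈ Ioc a b
  · have hphase : 2 * Real.pi * -(x * (-(2 * Real.pi)⁻¹ * t)) = t * x := by
      field_simp
    simp only [indicator_of_mem hx, Circle.smul_def, Real.fourierChar_apply, smul_eq_mul, modulate,
      hphase]
    exact mul_comm _ _
  · simp only [indicator_of_notMem hx, smul_zero]

theorem primitiveSize_modulate_right (f g : ℝ → ℂ) (t : ℝ) :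
    primitiveSize f (modulate g t) = primitiveSize f g := by
  simp only [primitiveSize, norm_modulate]

theorem norm_integral_modulate_le (hf : IntervalIntegrable f volume 0 1) (t : ℝ) {x : ℝ}
    (hx : x ∈ Icc (0 : ℝ) 1) :
    ‖∫ y in (0 : ℝ)..x, modulate f t y‖ ≤ ∫ y in (0 : ℝ)..1, ‖f y‖ := by
  calc _ ≤ ∫ y in (0 : ℝ)..x, ‖modulate f t y‖ :=
        intervalIntegral.norm_integral_le_integral_norm hx.1
    _ = ∫ y in (0 : ℝ)..x, ‖f y‖ := by simp only [norm_modulate]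
    _ ≤ ∫ y in (0 : ℝ)..1, ‖f y‖ :=
        intervalIntegral.integral_mono_interval le_rfl hx.1 hx.2
          (.of_forall fun _ => norm_nonneg _) hf.norm

theorem tendsto_primitiveSize_modulate (hf : IntervalIntegrable f volume 0 1)
    (hg : IntervalIntegrable g volume 0 1) :
    Tendsto (fun t => primitiveSize (modulate f t) g) (cobounded ℝ) (𝓝 0) := by
  have : (cobounded ℝ).IsCountablyGenerated := by
    rw [← comap_norm_atTop]
    infer_instance
  have hweighted : Tendsto
      (fun t => ∫ x in (0 : ℝ)..1, ‖∫ y in (0 : ℝ)..x, modulate f t y‖ * ‖g x‖)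
      (cobounded ℝ) (𝓝 (∫ _ in (0 : ℝ)..1, (0 : ℝ))) := by
    refine intervalIntegral.tendsto_integral_filter_of_dominated_convergence
      (fun x => (∫ y in (0 : ℝ)..1, ‖f y‖) * ‖g x‖) (.of_forall fun t => ?_)
      (.of_forall fun t => .of_forall fun x hx => ?_) (hg.norm.const_mul _)
      (.of_forall fun x hx => ?_)
    · have hprim := (isACOn01_integral (intervalIntegrable_modulate hf t)).continuousOn
      exact (hg.norm.continuousOn_mul hprim.norm).def'.aestronglyMeasurable
    · rw [uIoc_of_le zero_le_one] at hx
      rw [norm_mul, norm_norm, norm_norm]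
      gcongr
      exact norm_integral_modulate_le hf t (Ioc_subset_Icc_self hx)
    · rw [uIoc_of_le zero_le_one] at hx
      simpa using (tendsto_integral_modulate f hx.1.le).norm.mul_const ‖g x‖
  simpa [primitiveSize] using (tendsto_integral_modulate f zero_le_one).norm.add hweighted

end Modulate

section CoupledSystem

variable {f g u v : ℝ → ℂ}

theorem IsACOn01.norm_le_add_integral {u' : ℝ → ℂ} (hu : IsACOn01 u u') {x : ℝ}
    (hx : x ∈ Icc (0 : ℝ) 1) : ‖u x‖ ≤ ‖u 0‖ + ∫ y in (0 : ℝ)..x, ‖u' y‖ := by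
  rw [hu.2 x hx]
  exact (norm_add_le _ _).trans
    (add_le_add_right (intervalIntegral.norm_integral_le_integral_norm hx.1) _)

theorem norm_add_norm_le_of_coupled (hf : IntervalIntegrable f volume 0 1)
    (hg : IntervalIntegrable g volume 0 1) (hu : IsACOn01 u (fun x => f x * v x))
    (hv : IsACOn01 v (fun x => g x * u x)) {x : ℝ} (hx : x ∈ Icc (0 : ℝ) 1) :
    ‖u x‖ + ‖v x‖ ≤ (‖u 0‖ + ‖v 0‖) * Real.exp (∫ y in (0 : ℝ)..1, (‖f y‖ + ‖g y‖)) := by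
  set m : ℝ → ℝ := fun y => ‖f y‖ + ‖g y‖ with hm_def
  have hm : IntervalIntegrable m volume 0 1 := hf.norm.add hg.norm
  have hm_nonneg (y : ℝ) : 0 ≤ m y := by positivity
  have hcont : ContinuousOn (fun y => ‖u y‖ + ‖v y‖) (uIcc 0 1) :=
    hu.continuousOn.norm.add hv.continuousOn.norm
  have hsub {z : ℝ} (hz : z ∈ Icc (0 : ℝ) 1) : uIcc 0 z ⊆ uIcc 0 1 :=
    uIcc_subset_uIcc_left (Icc_subset_uIcc hz)
  have hle {z : ℝ} (hz : z ∈ Icc (0 : ℝ) 1) :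
      ‖u z‖ + ‖v z‖ ≤ (‖u 0‖ + ‖v 0‖) + ∫ y in (0 : ℝ)..z, m y * (‖u y‖ + ‖v y‖) := by
    have hu' := (hu.1.mono_set (hsub hz)).norm
    have hv' := (hv.1.mono_set (hsub hz)).norm
    have hint : (∫ y in (0 : ℝ)..z, ‖f y * v y‖) + ∫ y in (0 : ℝ)..z, ‖g y * u y‖
        ≤ ∫ y in (0 : ℝ)..z, m y * (‖u y‖ + ‖v y‖) := by
      rw [← intervalIntegral.integral_add hu' hv']
      refine intervalIntegral.integral_mono_on hz.1 (hu'.add hv')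
        ((hm.mul_continuousOn hcont).mono_set (hsub hz)) fun y _ => ?_
      rw [norm_mul, norm_mul, hm_def]
      nlinarith [mul_nonneg (norm_nonneg (f y)) (norm_nonneg (u y)),
        mul_nonneg (norm_nonneg (g y)) (norm_nonneg (v y))]
    linarith [hu.norm_le_add_integral hz, hv.norm_le_add_integral hz]
  calc _ ≤ (‖u 0‖ + ‖v 0‖) * Real.exp (∫ y in (0 : ℝ)..x, m y) :=
        le_mul_exp_integral_of_le_add_integral hx.1
          (hcont.mono (Icc_subset_uIcc.trans (hsub hx))) (hm.mono_set (hsub hx))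
          (fun y _ => hm_nonneg y) fun z hz => hle (Icc_subset_Icc_right hx.2 hz)
    _ ≤ _ := by
        gcongr
        exact intervalIntegral.integral_mono_interval le_rfl hx.1 hx.2
          (.of_forall hm_nonneg) hm

theorem norm_sub_le_mul_primitiveSize {K : ℝ} (hf : IntervalIntegrable f volume 0 1)
    (hg : IntervalIntegrable g volume 0 1) (hu : IsACOn01 u (fun x => f x * v x))
    (hv : IsACOn01 v (fun x => g x * u x))
    (hK : ∀ x ∈ Icc (0 : ℝ) 1, ‖u x‖ + ‖v x‖ ≤ K) :
    ‖u 1 - u 0‖ ≤ K * primitiveSize f g := by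
  set F : ℝ → ℂ := fun x => ∫ y in (0 : ℝ)..x, f y
  have hF : IsACOn01 F f := isACOn01_integral hf
  have hFgu : IntervalIntegrable (fun x => F x * (g x * u x)) volume 0 1 :=
    hv.1.continuousOn_mul hF.continuousOn
  have hparts : u 1 - u 0 = F 1 * v 1 - ∫ x in (0 : ℝ)..1, F x * (g x * u x) := by
    have h := (hF.mul hv).integral_eq_sub
    rw [intervalIntegral.integral_add hu.1 hFgu, hu.integral_eq_sub] at h
    have hF0 : F 0 = 0 := intervalIntegral.integral_same
    rw [eq_sub_of_add_eq h, hF0, zero_mul, sub_zero]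
  have hend : ‖F 1 * v 1‖ ≤ K * ‖F 1‖ := by
    rw [norm_mul, mul_comm]
    gcongr
    linarith [hK 1 (right_mem_Icc.2 zero_le_one), norm_nonneg (u 1)]
  have hint : ‖∫ x in (0 : ℝ)..1, F x * (g x * u x)‖ ≤ K * ∫ x in (0 : ℝ)..1, ‖F x‖ * ‖g x‖ := by
    rw [← intervalIntegral.integral_const_mul]
    refine intervalIntegral.norm_integral_le_of_norm_le zero_le_one (.of_forall fun x hx => ?_)
      ((hg.norm.continuousOn_mul hF.continuousOn.norm).const_mul K)
    rw [norm_mul, norm_mul, ← mul_assoc, mul_comm]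
    gcongr
    linarith [hK x (Ioc_subset_Icc_self hx), norm_nonneg (v x)]
  calc ‖u 1 - u 0‖ ≤ K * ‖F 1‖ + K * ∫ x in (0 : ℝ)..1, ‖F x‖ * ‖g x‖ := by
        rw [hparts]
        exact (norm_sub_le _ _).trans (add_le_add hend hint)
    _ = K * primitiveSize f g := (mul_add _ _ _).symm

theorem abs_one_sub_norm_mul_norm_le {r ρ : ℂ} (hf : IntervalIntegrable f volume 0 1)
    (hg : IntervalIntegrable g volume 0 1) (hu : IsACOn01 u (fun x => f x * v x))
    (hv : IsACOn01 v (fun x => g x * u x)) (h0 : v 0 = r * u 0) (h1 : u 1 = ρ * v 1)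
    (hne : ∃ x ∈ Icc (0 : ℝ) 1, u x ≠ 0 ∨ v x ≠ 0) :
    |1 - ‖ρ‖ * ‖r‖| ≤ (1 + ‖r‖) * Real.exp (∫ x in (0 : ℝ)..1, (‖f x‖ + ‖g x‖)) *
      (primitiveSize f g + ‖ρ‖ * primitiveSize g f) := by
  set N : ℝ := (1 + ‖r‖) * Real.exp (∫ x in (0 : ℝ)..1, (‖f x‖ + ‖g x‖)) with hN
  have hbound : ∀ x ∈ Icc (0 : ℝ) 1, ‖u x‖ + ‖v x‖ ≤ ‖u 0‖ * N := fun x hx => by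
    refine (norm_add_norm_le_of_coupled hf hg hu hv hx).trans_eq ?_
    rw [h0, norm_mul, hN]
    ring
  have hu0 : 0 < ‖u 0‖ := by
    refine norm_pos_iff.2 fun hzero => ?_
    obtain ⟨x, hx, hx_ne⟩ := hne
    have hsum := hbound x hx
    rw [hzero, norm_zero, zero_mul] at hsum
    exact hx_ne.elim (fun h => by linarith [norm_pos_iff.2 h, norm_nonneg (v x)])
      fun h => by linarith [norm_pos_iff.2 h, norm_nonneg (u x)]
  have hdu := norm_sub_le_mul_primitiveSize hf hg hu hv hbound
  have hdv := norm_sub_le_mul_primitiveSize hg hf hv hu fun x hx =>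
    (add_comm _ _).trans_le (hbound x hx)
  have hreflect : (ρ * r - 1) * u 0 = (u 1 - u 0) - ρ * (v 1 - v 0) := by
    rw [h0, h1]
    ring
  refine le_of_mul_le_mul_right ?_ hu0
  calc |1 - ‖ρ‖ * ‖r‖| * ‖u 0‖ ≤ ‖ρ * r - 1‖ * ‖u 0‖ := by
        gcongr
        rw [← norm_mul, abs_sub_comm]
        simpa using abs_norm_sub_norm_le (ρ * r) 1
    _ = ‖(u 1 - u 0) - ρ * (v 1 - v 0)‖ := by rw [← norm_mul, hreflect]
    _ ≤ ‖u 1 - u 0‖ + ‖ρ‖ * ‖v 1 - v 0‖ := by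
        rw [← norm_mul]
        exact norm_sub_le _ _
    _ ≤ ‖u 0‖ * N * primitiveSize f g + ‖ρ‖ * (‖u 0‖ * N * primitiveSize g f) := by gcongr
    _ = N * (primitiveSize f g + ‖ρ‖ * primitiveSize g f) * ‖u 0‖ := by ring

end CoupledSystem

section AdjointSystem

variable {a b c d : ℝ → ℂ} {r₀ r₁ : ℂ} {s : ℝ}

/-- The homogeneous adjoint boundary value problem at the real frequency `s` (the paper's `k ω`),
with complex coefficients, has a solution `(φ, ψ)` that does not vanish identically on `[0,1]`. -/
def HasNontrivialAdjointSolution (a b c d : ℝ → ℂ) (r₀ r₁ : ℂ) (s : ℝ) : Prop :=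
  ∃ φ ψ φ' ψ' : ℝ → ℂ,
    IsACOn01 φ φ' ∧ IsACOn01 ψ ψ' ∧
    (∀ᵐ x ∂volume.restrict (Ioo 0 1), -φ' x + (a x - s * Complex.I) * φ x + c x * ψ x = 0) ∧
    (∀ᵐ x ∂volume.restrict (Ioo 0 1), ψ' x + (d x - s * Complex.I) * ψ x + b x * φ x = 0) ∧
    ψ 0 = r₀ * φ 0 ∧ φ 1 = r₁ * ψ 1 ∧ ∃ x ∈ Icc (0 : ℝ) 1, φ x ≠ 0 ∨ ψ x ≠ 0

/-- The coefficient of `ψ` in the equation for `φ` at frequency `0`, once the zeroth-order terms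
have been removed by integrating factors; at frequency `s` it is modulated by `e^{2isx}`. -/
noncomputable def upperCoupling (a c d : ℝ → ℂ) (x : ℝ) : ℂ :=
  expIntegral (fun y => -(a y + d y)) x * c x

/-- The coefficient of `φ` in the equation for `ψ` at frequency `0`, once the zeroth-order terms
have been removed by integrating factors; at frequency `s` it is modulated by `e^{-2isx}`. -/
noncomputable def lowerCoupling (a b d : ℝ → ℂ) (x : ℝ) : ℂ :=
  -(expIntegral (fun y => a y + d y) x * b x)

theorem intervalIntegrable_upperCoupling (ha : IntervalIntegrable a volume 0 1)
    (hc : IntervalIntegrable c volume 0 1) (hd : IntervalIntegrable d volume 0 1) :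
    IntervalIntegrable (upperCoupling a c d) volume 0 1 :=
  hc.continuousOn_mul (isACOn01_expIntegral (ha.add hd).neg).continuousOn

theorem intervalIntegrable_lowerCoupling (ha : IntervalIntegrable a volume 0 1)
    (hb : IntervalIntegrable b volume 0 1) (hd : IntervalIntegrable d volume 0 1) :
    IntervalIntegrable (lowerCoupling a b d) volume 0 1 :=
  (hb.continuousOn_mul (isACOn01_expIntegral (ha.add hd)).continuousOn).neg

theorem expIntegral_freq_sub_eq (ha : IntervalIntegrable a volume 0 1)
    (hd : IntervalIntegrable d volume 0 1) {x : ℝ} (hx : x ∈ Icc (0 : ℝ) 1) :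
    expIntegral (fun y => s * Complex.I - a y) x =
      modulate (expIntegral fun y => -(a y + d y)) (2 * s) x *
        expIntegral (fun y => d y - s * Complex.I) x :=
  expIntegral_eq_modulate_mul (ha.add hd).neg (hd.sub intervalIntegrable_const)
    (fun y => by push_cast; ring) hx

theorem expIntegral_sub_freq_eq (ha : IntervalIntegrable a volume 0 1)
    (hd : IntervalIntegrable d volume 0 1) {x : ℝ} (hx : x ∈ Icc (0 : ℝ) 1) :
    expIntegral (fun y => d y - s * Complex.I) x =
      modulate (expIntegral fun y => a y + d y) (-2 * s) x *
        expIntegral (fun y => s * Complex.I - a y) x :=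
  expIntegral_eq_modulate_mul (ha.add hd) (intervalIntegrable_const.sub ha)
    (fun y => by push_cast; ring) hx

theorem HasNontrivialAdjointSolution.exists_coupled (ha : IntervalIntegrable a volume 0 1)
    (hd : IntervalIntegrable d volume 0 1) (hs : HasNontrivialAdjointSolution a b c d r₀ r₁ s) :
    ∃ u v : ℝ → ℂ,
      IsACOn01 u (fun x => modulate (upperCoupling a c d) (2 * s) x * v x) ∧
      IsACOn01 v (fun x => modulate (lowerCoupling a b d) (-2 * s) x * u x) ∧
      v 0 = r₀ * u 0 ∧
      u 1 = r₁ * modulate (expIntegral fun y => -(a y + d y)) (2 * s) 1 * v 1 ∧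
      ∃ x ∈ Icc (0 : ℝ) 1, u x ≠ 0 ∨ v x ≠ 0 := by
  obtain ⟨φ, ψ, φ', ψ', hφ, hψ, hφ_eq, hψ_eq, h0, h1, x₀, hx₀, hne⟩ := hs
  set A : ℝ → ℂ := fun y => s * Complex.I - a y
  set D : ℝ → ℂ := fun y => d y - s * Complex.I
  have hA : IntervalIntegrable A volume 0 1 := intervalIntegrable_const.sub ha
  have hD : IntervalIntegrable D volume 0 1 := hd.sub intervalIntegrable_const
  have hu : IsACOn01 (fun x => expIntegral A x * φ x) fun x => expIntegral A x * (c x * ψ x) := by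
    refine hφ.expIntegral_mul hA ?_
    filter_upwards [hφ_eq] with x hx
    linear_combination -hx
  have hv : IsACOn01 (fun x => expIntegral D x * ψ x) fun x =>
      expIntegral D x * -(b x * φ x) := by
    refine hψ.expIntegral_mul hD ?_
    filter_upwards [hψ_eq] with x hx
    linear_combination hx
  refine ⟨_, _, hu.congr_deriv ?_, hv.congr_deriv ?_, by simp [h0], ?_, x₀, hx₀, ?_⟩
  · filter_upwards [ae_restrict_mem measurableSet_Ioo] with x hx
    rw [expIntegral_freq_sub_eq ha hd (Ioo_subset_Icc_self hx)]
    simp only [modulate, upperCoupling]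
    ring
  · filter_upwards [ae_restrict_mem measurableSet_Ioo] with x hx
    rw [expIntegral_sub_freq_eq ha hd (Ioo_subset_Icc_self hx)]
    simp only [modulate, lowerCoupling]
    ring
  · rw [expIntegral_freq_sub_eq ha hd (right_mem_Icc.2 zero_le_one), h1]
    ring
  · simpa [expIntegral_ne_zero] using hne

theorem HasNontrivialAdjointSolution.abs_one_sub_le (ha : IntervalIntegrable a volume 0 1)
    (hb : IntervalIntegrable b volume 0 1) (hc : IntervalIntegrable c volume 0 1)
    (hd : IntervalIntegrable d volume 0 1) (hs : HasNontrivialAdjointSolution a b c d r₀ r₁ s) :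
    |1 - ‖r₁ * expIntegral (fun y => -(a y + d y)) 1‖ * ‖r₀‖| ≤
      (1 + ‖r₀‖) *
        Real.exp (∫ x in (0 : ℝ)..1, (‖upperCoupling a c d x‖ + ‖lowerCoupling a b d x‖)) *
      (primitiveSize (modulate (upperCoupling a c d) (2 * s)) (lowerCoupling a b d) +
        ‖r₁ * expIntegral (fun y => -(a y + d y)) 1‖ *
          primitiveSize (modulate (lowerCoupling a b d) (-2 * s)) (upperCoupling a c d)) := by
  obtain ⟨u, v, hu, hv, h0, h1, hne⟩ := hs.exists_coupled ha hd
  simpa only [norm_mul, norm_modulate, primitiveSize_modulate_right] using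
    abs_one_sub_norm_mul_norm_le
      (intervalIntegrable_modulate (intervalIntegrable_upperCoupling ha hc hd) (2 * s))
      (intervalIntegrable_modulate (intervalIntegrable_lowerCoupling ha hb hd) (-2 * s))
      hu hv h0 h1 hne

theorem one_sub_norm_mul_expIntegral_mul_norm_ne_zero (ha : IntervalIntegrable a volume 0 1)
    (hd : IntervalIntegrable d volume 0 1)
    (hne : ‖r₀ * r₁‖ ≠ Real.exp ((∫ x in (0 : ℝ)..1, a x) + ∫ x in (0 : ℝ)..1, d x).re) :
    1 - ‖r₁ * expIntegral (fun y => -(a y + d y)) 1‖ * ‖r₀‖ ≠ 0 := by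
  rw [sub_ne_zero, norm_mul, norm_expIntegral, intervalIntegral.integral_neg,
    intervalIntegral.integral_add ha hd, Complex.neg_re, Real.exp_neg]
  contrapose! hne
  field_simp at hne
  rw [hne, norm_mul]
  ring

theorem stmt11_general (ha : IntervalIntegrable a volume 0 1)
    (hb : IntervalIntegrable b volume 0 1) (hc : IntervalIntegrable c volume 0 1)
    (hd : IntervalIntegrable d volume 0 1)
    (hne : ‖r₀ * r₁‖ ≠ Real.exp ((∫ x in (0 : ℝ)..1, a x) + ∫ x in (0 : ℝ)..1, d x).re) :
    IsBounded {s : ℝ | HasNontrivialAdjointSolution a b c d r₀ r₁ s} := by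
  have hgap := abs_pos.2 (one_sub_norm_mul_expIntegral_mul_norm_ne_zero ha hd hne)
  have hp := intervalIntegrable_upperCoupling ha hc hd
  have hq := intervalIntegrable_lowerCoupling ha hb hd
  have hp_lim := (tendsto_primitiveSize_modulate hp hq).comp
    (tendsto_mul_left_cobounded (two_ne_zero (α := ℝ)))
  have hq_lim := (tendsto_primitiveSize_modulate hq hp).comp
    (tendsto_mul_left_cobounded (neg_ne_zero.2 (two_ne_zero (α := ℝ))))
  have hlim := (hp_lim.add (hq_lim.const_mul
    ‖r₁ * expIntegral (fun y => -(a y + d y)) 1‖)).const_mul ((1 + ‖r₀‖) *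
      Real.exp (∫ x in (0 : ℝ)..1, (‖upperCoupling a c d x‖ + ‖lowerCoupling a b d x‖)))
  rw [mul_zero, add_zero, mul_zero] at hlim
  rw [isBounded_def]
  filter_upwards [hlim.eventually_lt_const hgap] with s hsmall hs
  exact (hs.abs_one_sub_le ha hb hc hd).not_gt hsmall

end AdjointSystem

/-- under `a, d ∈ L^∞`, `b, c` of bounded variation and
`|r₀r₁| ≠ e^{α(1)+δ(1)}`, the set of `k ∈ ℤ` for which the homogeneous adjoint
boundary value problem `−φ' + (a − ikω)φ + cψ = 0`, `ψ' + (d − ikω)ψ + bφ = 0`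
a.e. on `(0,1)` with `ψ(0) = r₀φ(0)`, `φ(1) = r₁ψ(1)` has a nontrivial solution
is finite. -/
theorem stmt11 (ω r₀ r₁ : ℝ) (hω : 0 < ω) (a d : ℝ → ℝ)
    (ha : Measurable a) (hd : Measurable d)
    (Ca Cd : ℝ) (haB : ∀ x, |a x| ≤ Ca) (hdB : ∀ x, |d x| ≤ Cd)
    (b c : ℝ → ℝ)
    (hb : BoundedVariationOn b (Icc (0:ℝ) 1)) (hc : BoundedVariationOn c (Icc (0:ℝ) 1))
    (α δ : ℝ → ℝ)
    (hα : ∀ x, α x = ∫ y in (0:ℝ)..x, a y)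
    (hδ : ∀ x, δ x = ∫ y in (0:ℝ)..x, d y)
    (hne : |r₀ * r₁| ≠ Real.exp (α 1 + δ 1)) :
    {k : ℤ | ∃ φ ψ φ' ψ' : ℝ → ℂ,
      IsACOn01 φ φ' ∧ IsACOn01 ψ ψ' ∧
      (∀ᵐ x ∂(volume.restrict (Ioo (0 : ℝ) 1)),
        -φ' x + ((a x : ℂ) - (k : ℂ) * (ω : ℂ) * Complex.I) * φ x + ((c x : ℝ) : ℂ) * ψ x = 0) ∧
      (∀ᵐ x ∂(volume.restrict (Ioo (0 : ℝ) 1)),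
        ψ' x + ((d x : ℂ) - (k : ℂ) * (ω : ℂ) * Complex.I) * ψ x + ((b x : ℝ) : ℂ) * φ x = 0) ∧
      ψ 0 = (r₀ : ℂ) * φ 0 ∧ φ 1 = (r₁ : ℂ) * ψ 1 ∧
      ∃ x ∈ Icc (0:ℝ) 1, φ x ≠ 0 ∨ ψ x ≠ 0}.Finite := by
  rw [← uIcc_of_le zero_le_one] at hb hc
  have hbounded := stmt11_general (r₀ := r₀) (r₁ := r₁)
    (intervalIntegrable_ofReal (intervalIntegrable_of_abs_le ha haB))
    (intervalIntegrable_ofReal (intervalIntegrable_of_boundedVariationOn hb))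
    (intervalIntegrable_ofReal (intervalIntegrable_of_boundedVariationOn hc))
    (intervalIntegrable_ofReal (intervalIntegrable_of_abs_le hd hdB))
    (by simpa [hα, hδ, intervalIntegral.integral_ofReal] using hne)
  simpa [HasNontrivialAdjointSolution] using finite_setOf_intCast_mul_mem hbounded hω.ne'
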